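/- Let G be a multigraph with maximum degree Δ. Using the palette {1, …, ⌊3Δ/2 + 1/2⌋}, any precoloured matching can be extended to a proper edge-colouring of all of G. -/

import Mathlib

variable {V E : Type*}

/-- Edges `e` and `f` of a multigraph (given by its endpoint map `ends`) are adjacent:
they are distinct and share an endpoint. -/
def MAdj (ends : E → Sym2 V) (e f : E) : Prop :=
  e ≠ f ∧ ∃ v : V, v ∈ ends e ∧ v ∈ ends f

/-- `c` is a proper edge-colouring of the multigraph: adjacent edges get distinct colours. -/
def MProper (ends : E → Sym2 V) (c : E → ℕ) : Prop :=
  ∀ e f : E, MAdj ends e f → c e ≠ c f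

/-- The degree of a vertex `v`: the number of edges incident with it. -/
noncomputable def mdeg (ends : E → Sym2 V) (v : V) : ℕ :=
  {e : E | v ∈ ends e}.ncard

/-!
Delete a maximum cut of `G - M` from `G`. The remaining edges have degree at most `(d(v) + 1) / 2`
at each vertex `v`, so that the precolouring of `M` extends to all of them greedily. The edges of
the cut form a bipartite multigraph, and on an edge `uv` of it at least as many colours are still
available as the larger degree of `u` and `v` in that bipartite multigraph. By the theorem of
Borodin, Kostochka and Woodall, a strengthening of Galvin's theorem to local list sizes, lists of
this size suffice.

The proof of that theorem ranks the edges so that, when each edge is dominated by the edges of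
smaller rank at one end and by those of larger rank at the other, all edges have small out-degree.
The ranking is found by peeling off matchings one at a time. Every induced subdigraph has a kernel,
by the Gale–Shapley stable matching argument, and a digraph with this property can be coloured from
lists exceeding the out-degrees.
-/

open scoped Finset

/-! ### List colourings of a relation -/

section ListColouring

variable {γ : Type*} {r D : E → E → Prop} {S A B K : Set E} {k : E → ℕ} {c c₀ c₁ : E → γ}

/-- Proper colourings of the conflict relation `r` induced on `S`. The relation need not be
symmetric, so that the domination digraphs of the kernel method are covered too. -/
def ProperOn (r : E → E → Prop) (S : Set E) (c : E → γ) : Prop :=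
  ∀ e ∈ S, ∀ f ∈ S, r e f → c e ≠ c f

/-- Choosability of `r` on `S` with element-dependent list sizes: all lists of colours from `γ`
with at least `k e` entries at each `e ∈ S` allow a proper colouring. -/
def IsChoosable (γ : Type*) (r : E → E → Prop) (S : Set E) (k : E → ℕ) : Prop :=
  ∀ L : E → Finset γ, (∀ e ∈ S, k e ≤ #(L e)) → ∃ c, ProperOn r S c ∧ ∀ e ∈ S, c e ∈ L e

/-- A kernel of the digraph `D` on `S`: an independent set `K` such that every element of `S`
outside `K` has an out-neighbour in `K`. -/
structure IsKernel (D : E → E → Prop) (S K : Set E) : Prop where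
  subset : K ⊆ S
  independent : ∀ e ∈ K, ∀ f ∈ K, ¬ D e f
  absorbing : ∀ e ∈ S, e ∉ K → ∃ f ∈ K, D e f

theorem ProperOn.piecewise [DecidablePred (· ∈ A)] (h₀ : ProperOn r A c₀) (h₁ : ProperOn r B c₁)
    (hAB : ∀ e ∈ A, ∀ f ∈ B, r e f ∨ r f e → c₀ e ≠ c₁ f) :
    ProperOn r (A ∪ B) (A.piecewise c₀ c₁) := by
  intro e he f hf hef
  by_cases heA : e ∈ A <;> by_cases hfA : f ∈ A <;> simp only [Set.piecewise, heA, hfA, if_true,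
    if_false]
  · exact h₀ e heA f hfA hef
  · exact hAB e heA f (hf.resolve_left hfA) (.inl hef)
  · exact (hAB f hfA e (he.resolve_left heA) (.inr hef)).symm
  · exact h₁ e (he.resolve_left heA) f (hf.resolve_left hfA) hef

theorem IsChoosable.mono {r' : E → E → Prop} {k' : E → ℕ} (h : IsChoosable γ r S k)
    (hr : ∀ e ∈ S, ∀ f ∈ S, r' e f → r e f ∨ r f e) (hk : ∀ e ∈ S, k e ≤ k' e) :
    IsChoosable γ r' S k' := by
  intro L hL
  obtain ⟨c, hc, hcL⟩ := h L fun e he ↦ (hk e he).trans (hL e he)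
  refine ⟨c, fun e he f hf hef ↦ ?_, hcL⟩
  exact (hr e he f hf hef).elim (hc e he f hf) fun h ↦ (hc f hf e he h).symm

variable [Finite E]

theorem ProperOn.exists_extend [Std.Symm r] (hc₀ : ProperOn r A c₀) (hAB : Disjoint A B)
    (hB : IsChoosable γ r B k) {L : E → Finset γ}
    (hL : ∀ e ∈ B, k e + {f ∈ A | r e f}.ncard ≤ #(L e)) :
    ∃ c, ProperOn r (A ∪ B) c ∧ A.EqOn c c₀ ∧ ∀ e ∈ B, c e ∈ L e := by
  classical
  let used (e : E) : Finset γ := (c₀ '' {f ∈ A | r e f}).toFinite.toFinset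
  have used_card (e : E) : #(used e) ≤ {f ∈ A | r e f}.ncard := by
    rw [← Set.ncard_eq_toFinset_card _ (Set.toFinite _)]
    exact Set.ncard_image_le (Set.toFinite _)
  obtain ⟨c₁, hc₁, hc₁L⟩ := hB (fun e ↦ L e \ used e) fun e he ↦ by
    have := Finset.le_card_sdiff (used e) (L e)
    have := hL e he
    have := used_card e
    omega
  refine ⟨A.piecewise c₀ c₁, hc₀.piecewise hc₁ fun e he f hf hef heq ↦ ?_,
    fun e he ↦ Set.piecewise_eq_of_mem _ _ _ he, fun e he ↦ ?_⟩
  · refine (Finset.mem_sdiff.1 (hc₁L f hf)).2 ?_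
    simpa [used] using ⟨e, ⟨he, hef.elim symm id⟩, heq⟩
  · rw [Set.piecewise_eq_of_notMem _ _ _ (hAB.notMem_of_mem_right he)]
    exact (Finset.mem_sdiff.1 (hc₁L e he)).1

theorem IsKernel.ncard_lt_of_notMem {T : Set E} {e : E} (hK : IsKernel D T K) (hTS : T ⊆ S)
    (he : e ∈ T) (heK : e ∉ K) : {f ∈ S \ K | D e f}.ncard < {f ∈ S | D e f}.ncard := by
  obtain ⟨f, hfK, hef⟩ := hK.absorbing e he heK
  exact Set.ncard_lt_ncard
    ⟨fun g hg ↦ ⟨hg.1.1, hg.2⟩, fun h ↦ (h ⟨hTS (hK.subset hfK), hef⟩).1.2 hfK⟩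

/- Give one colour `α` to a kernel of the elements whose list contains `α` and delete `α` from all
other lists: whatever loses a colour also loses an out-neighbour. -/
theorem IsChoosable.of_kernels [Nonempty γ] (hD : ∀ T ⊆ S, ∃ K, IsKernel D T K) :
    IsChoosable γ D S fun e ↦ {f ∈ S | D e f}.ncard + 1 := by
  classical
  induction S using WellFoundedLT.induction with
  | _ S ih =>
  intro L hL
  obtain rfl | ⟨e₀, he₀⟩ := S.eq_empty_or_nonempty
  · exact ⟨fun _ ↦ Classical.arbitrary γ, by simp [ProperOn], by simp⟩
  obtain ⟨α, hα⟩ : (L e₀).Nonempty :=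
    Finset.card_pos.1 ((Nat.succ_pos _).trans_le (hL e₀ he₀))
  obtain ⟨K, hK⟩ := hD {e ∈ S | α ∈ L e} (Set.sep_subset _ _)
  have hKS : K ⊆ S := hK.subset.trans (Set.sep_subset _ _)
  have hKne : K.Nonempty := by
    by_cases h : e₀ ∈ K
    · exact ⟨e₀, h⟩
    · obtain ⟨f, hf, -⟩ := hK.absorbing e₀ ⟨he₀, hα⟩ h
      exact ⟨f, hf⟩
  obtain ⟨c, hc, hcL⟩ := ih (S \ K) (hKS.sdiff_ssubset_of_nonempty hKne)
    (fun T hT ↦ hD T (hT.trans Set.sdiff_subset)) (fun e ↦ (L e).erase α) fun e he ↦ by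
      have hLe : {f ∈ S | D e f}.ncard + 1 ≤ #(L e) := hL e he.1
      beta_reduce
      by_cases hαe : α ∈ L e
      · have := hK.ncard_lt_of_notMem (Set.sep_subset _ _) ⟨he.1, hαe⟩ he.2
        rw [Finset.card_erase_of_mem hαe]
        omega
      · rw [Finset.erase_eq_of_notMem hαe]
        have : {f ∈ S \ K | D e f}.ncard ≤ {f ∈ S | D e f}.ncard :=
          Set.ncard_le_ncard fun f hf ↦ ⟨hf.1.1, hf.2⟩
        omega
  refine ⟨K.piecewise (fun _ ↦ α) c, ?_, fun e he ↦ ?_⟩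
  · rw [← Set.union_sdiff_cancel hKS]
    exact ProperOn.piecewise (fun e he f hf hef ↦ absurd hef (hK.independent e he f hf)) hc
      fun e _ f hf _ ↦ (Finset.ne_of_mem_erase (hcL f hf)).symm
  · by_cases heK : e ∈ K
    · simpa [heK] using (hK.subset heK).2
    · simpa [heK] using Finset.mem_of_mem_erase (hcL e ⟨he, heK⟩)

theorem exists_isKernel_of_symm [Std.Symm r] [Std.Irrefl r] (S : Set E) :
    ∃ K, IsKernel r S K := by
  obtain ⟨K, -, hK⟩ := Finite.exists_le_maximal
    (p := fun K : Set E ↦ K ⊆ S ∧ ∀ e ∈ K, ∀ f ∈ K, ¬ r e f) (a := ∅) (by simp)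
  refine ⟨K, hK.prop.1, hK.prop.2, fun e heS heK ↦ ?_⟩
  by_contra! hno
  refine heK (hK.le_of_ge ⟨Set.insert_subset heS hK.prop.1, ?_⟩ (Set.subset_insert e K)
    (Set.mem_insert e K))
  rintro f (rfl | hf) g (rfl | hg)
  · exact irrefl_of r _
  · exact hno g hg
  · exact fun h ↦ hno f hf (symm h)
  · exact hK.prop.2 f hf g hg

theorem isChoosable_of_symm [Nonempty γ] [Std.Symm r] [Std.Irrefl r] (S : Set E) :
    IsChoosable γ r S fun e ↦ {f ∈ S | r e f}.ncard + 1 :=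
  .of_kernels fun T _ ↦ exists_isKernel_of_symm T

end ListColouring

/-! ### Peeling matchings off bipartite multigraphs -/

section Peeling

variable {X Y : Type*} {a : E → X} {b : E → Y} {S T N : Set E}

/-- The degree of the vertex `x` in the bipartite multigraph with edge set `S`, where `a` sends each
edge to its endpoint on the side of `x`. -/
noncomputable def sideDeg (S : Set E) (a : E → X) (x : X) : ℕ :=
  {e ∈ S | a e = x}.ncard

/-- A nonempty matching `N` in the bipartite multigraph with edge set `S` and endpoint maps `a`, `b`
such that each edge meeting `N` on the `a`-side also meets `N` on the `b`-side or has smaller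
`b`-degree than `a`-degree. These are the matchings that the construction of a Galvin ranking
removes one after another. -/
structure IsPeelable (S : Set E) (a : E → X) (b : E → Y) (N : Set E) : Prop where
  subset : N ⊆ S
  nonempty : N.Nonempty
  injOn_left : N.InjOn a
  injOn_right : N.InjOn b
  mem_image_or_lt : ∀ e ∈ S, a e ∈ a '' N →
    b e ∈ b '' N ∨ sideDeg S b (b e) < sideDeg S a (a e)

/- A subset violating Hall's condition would still have at most as many neighbours as elements after
losing one element, against the minimality of `T`. -/
theorem card_le_card_biUnion_of_minimal {ι α : Type*} [DecidableEq α] {t : ι → Finset α}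
    {T U : Finset ι} (ht : ∀ i ∈ T, (t i).Nonempty)
    (hT : Minimal (fun U ↦ U.Nonempty ∧ #(U.biUnion t) ≤ #U) T) (hUT : U ⊆ T) :
    #U ≤ #(U.biUnion t) := by
  classical
  by_contra! hlt
  obtain ⟨x, hx⟩ : U.Nonempty := Finset.card_pos.1 (Nat.zero_lt_of_lt hlt)
  obtain ⟨y, hy⟩ := ht x (hUT hx)
  have hpos : 0 < #(U.biUnion t) := Finset.card_pos.2 ⟨y, Finset.mem_biUnion.2 ⟨x, hx, hy⟩⟩
  have herase := Finset.card_erase_of_mem hx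
  have hle := Finset.card_le_card
    (Finset.biUnion_subset_biUnion_of_subset_left t (U.erase_subset x))
  have hP : (U.erase x).Nonempty ∧ #((U.erase x).biUnion t) ≤ #(U.erase x) :=
    ⟨Finset.card_pos.1 (by omega), by omega⟩
  exact Finset.notMem_erase x U (hT.le_of_le hP ((U.erase_subset x).trans hUT) (hUT hx))

theorem exists_injective_onto_neighbors {ι α : Type*} [DecidableEq α] (t : ι → Finset α)
    {A : Finset ι} (hA : A.Nonempty) (ht : ∀ i ∈ A, (t i).Nonempty)
    (hcard : #(A.biUnion t) ≤ #A) :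
    ∃ T ⊆ A, T.Nonempty ∧ ∃ f : T → α, f.Injective ∧ (∀ i : T, f i ∈ t i) ∧
      ∀ i ∈ T, ∀ y ∈ t i, ∃ j, f j = y := by
  classical
  obtain ⟨T, hTA, hT⟩ := exists_minimal_le_of_wellFoundedLT
    (fun U : Finset ι ↦ U.Nonempty ∧ #(U.biUnion t) ≤ #U) A ⟨hA, hcard⟩
  obtain ⟨f, hf, hft⟩ := (Finset.all_card_le_biUnion_card_iff_exists_injective
    fun i : T ↦ t i).1 fun s ↦ by
      rw [← Finset.image_biUnion (f := Subtype.val), ← Finset.card_image_of_injective s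
        Subtype.val_injective]
      exact card_le_card_biUnion_of_minimal (fun i hi ↦ ht i (hTA hi)) hT
        (Finset.image_subset_iff.2 fun i _ ↦ i.2)
  have himage : Finset.univ.image f = T.biUnion t := by
    refine Finset.eq_of_subset_of_card_le (fun z hz ↦ ?_) ?_
    · obtain ⟨j, -, rfl⟩ := Finset.mem_image.1 hz
      exact Finset.mem_biUnion.2 ⟨j, j.2, hft j⟩
    · simpa [Finset.card_image_of_injective _ hf] using hT.prop.2
  refine ⟨T, hTA, hT.prop.1, f, hf, hft, fun i hi y hy ↦ ?_⟩
  have hyf : y ∈ Finset.univ.image f := himage ▸ Finset.mem_biUnion.2 ⟨i, hi, hy⟩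
  simpa using hyf

theorem IsPeelable.singleton {e : E} (he : e ∈ S)
    (h : ∀ f ∈ S, a f = a e → sideDeg S b (b f) < sideDeg S a (a e)) : IsPeelable S a b {e} where
  subset := Set.singleton_subset_iff.2 he
  nonempty := Set.singleton_nonempty e
  injOn_left := Set.injOn_singleton a e
  injOn_right := Set.injOn_singleton b e
  mem_image_or_lt f hf hfe := by
    have hfe : a f = a e := by simpa using hfe
    exact .inr (hfe ▸ h f hf hfe)

variable [Finite E]

theorem sideDeg_mono (h : S ⊆ T) (a : E → X) (x : X) : sideDeg S a x ≤ sideDeg T a x :=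
  Set.ncard_le_ncard fun _ he ↦ ⟨h he.1, he.2⟩

theorem sideDeg_sdiff_lt (hNS : N ⊆ S) {x : X} (hx : x ∈ a '' N) :
    sideDeg (S \ N) a x < sideDeg S a x := by
  obtain ⟨n, hn, rfl⟩ := hx
  exact Set.ncard_lt_ncard
    ⟨fun e he ↦ ⟨he.1.1, he.2⟩, fun h ↦ (h (show n ∈ _ from ⟨hNS hn, rfl⟩)).1.2 hn⟩

theorem sideDeg_le_one (ha : N.InjOn a) (x : X) : sideDeg N a x ≤ 1 :=
  (Set.ncard_le_one (Set.toFinite _)).2 fun _ he _ hf ↦ ha he.1 hf.1 (he.2.trans hf.2.symm)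

theorem sideDeg_eq_zero {x : X} (hx : x ∉ a '' N) : sideDeg N a x = 0 := by
  rw [sideDeg, Set.ncard_eq_zero]
  exact Set.eq_empty_of_forall_notMem fun e he ↦ hx ⟨e, he⟩

theorem exists_matching_onto_neighbors (hS : S.Nonempty)
    (hcard : (b '' S).ncard ≤ (a '' S).ncard) :
    ∃ N ⊆ S, N.Nonempty ∧ N.InjOn a ∧ N.InjOn b ∧ ∀ e ∈ S, a e ∈ a '' N → b e ∈ b '' N := by
  classical
  let A : Finset X := (a '' S).toFinite.toFinset
  let nbrs (x : X) : Finset Y := (b '' {e ∈ S | a e = x}).toFinite.toFinset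
  have mem_nbrs {x y} : y ∈ nbrs x ↔ ∃ e ∈ S, a e = x ∧ b e = y := by simp [nbrs, and_assoc]
  have hA : A.Nonempty := by simpa [A] using hS
  have hnbrs : ∀ x ∈ A, (nbrs x).Nonempty := by
    simp only [A, Set.Finite.mem_toFinset, Set.forall_mem_image]
    exact fun e he ↦ ⟨b e, mem_nbrs.2 ⟨e, he, rfl, rfl⟩⟩
  have hunion : A.biUnion nbrs = (b '' S).toFinite.toFinset := by
    ext y
    simp only [Finset.mem_biUnion, mem_nbrs, Set.Finite.mem_toFinset, A, Set.mem_image]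
    grind
  obtain ⟨T, -, ⟨x₀, hx₀⟩, f, hf, hfn, hfsurj⟩ :=
    exists_injective_onto_neighbors nbrs hA hnbrs <| by
      rwa [hunion, ← Set.ncard_eq_toFinset_card _ (Set.toFinite _),
        ← Set.ncard_eq_toFinset_card _ (Set.toFinite _)]
  choose g hgS hga hgb using fun x : T ↦ mem_nbrs.1 (hfn x)
  refine ⟨Set.range g, Set.range_subset_iff.2 hgS, ⟨g ⟨x₀, hx₀⟩, Set.mem_range_self _⟩, ?_, ?_, ?_⟩
  · rintro _ ⟨x, rfl⟩ _ ⟨y, rfl⟩ h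
    rw [hga, hga] at h
    rw [Subtype.ext h]
  · rintro _ ⟨x, rfl⟩ _ ⟨y, rfl⟩ h
    rw [hgb, hgb] at h
    rw [hf h]
  · rintro e he ⟨_, ⟨x, rfl⟩, hx⟩
    rw [hga] at hx
    obtain ⟨j, hj⟩ := hfsurj x x.2 (b e) (mem_nbrs.2 ⟨e, he, hx.symm, rfl⟩)
    exact ⟨g j, ⟨j, rfl⟩, (hgb j).trans hj⟩

theorem exists_isPeelable_of_forall_le {d : ℕ} (hd : ∀ e ∈ S, sideDeg S b (b e) ≤ d)
    (hne : {e ∈ S | sideDeg S a (a e) = d ∧ sideDeg S b (b e) = d}.Nonempty)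
    (hcard : (b '' {e ∈ S | sideDeg S a (a e) = d ∧ sideDeg S b (b e) = d}).ncard ≤
      (a '' {e ∈ S | sideDeg S a (a e) = d ∧ sideDeg S b (b e) = d}).ncard) :
    ∃ N, IsPeelable S a b N := by
  obtain ⟨N, hNS, hN, hNa, hNb, hnbr⟩ := exists_matching_onto_neighbors hne hcard
  refine ⟨N, hNS.trans (Set.sep_subset _ _), hN, hNa, hNb, fun e he heN ↦ ?_⟩
  have hae : sideDeg S a (a e) = d := by
    obtain ⟨n, hn, hne⟩ := heN
    exact hne ▸ (hNS hn).2.1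
  obtain hlt | hbe := (hd e he).lt_or_eq
  · exact .inr (hae ▸ hlt)
  · exact .inl (hnbr e ⟨he, hae, hbe⟩ heN)

/- If no edge has maximum degree at both ends, any edge at a vertex of maximum degree is peelable;
otherwise apply the matching lemma to the edges that do. -/
theorem exists_isPeelable (a : E → X) (b : E → Y) (hS : S.Nonempty) :
    (∃ N, IsPeelable S a b N) ∨ ∃ N, IsPeelable S b a N := by
  obtain ⟨e, he, hmax⟩ := Set.exists_max_image S
    (fun e ↦ max (sideDeg S a (a e)) (sideDeg S b (b e))) S.toFinite hS
  set d := max (sideDeg S a (a e)) (sideDeg S b (b e)) with hd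
  have had : ∀ f ∈ S, sideDeg S a (a f) ≤ d := fun f hf ↦ (le_max_left _ _).trans (hmax f hf)
  have hbd : ∀ f ∈ S, sideDeg S b (b f) ≤ d := fun f hf ↦ (le_max_right _ _).trans (hmax f hf)
  obtain hempty | hne :=
    {e ∈ S | sideDeg S a (a e) = d ∧ sideDeg S b (b e) = d}.eq_empty_or_nonempty
  · have hboth : ∀ f ∈ S, sideDeg S a (a f) = d → sideDeg S b (b f) ≠ d := by
      exact fun f hf haf hbf ↦ Set.eq_empty_iff_forall_notMem.1 hempty f ⟨hf, haf, hbf⟩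
    obtain hae | hbe := max_choice (sideDeg S a (a e)) (sideDeg S b (b e))
    · rw [← hd] at hae
      refine .inl ⟨{e}, .singleton he fun f hf hfe ↦ hae ▸ (hbd f hf).lt_of_ne ?_⟩
      exact hboth f hf (by rw [hfe, ← hae])
    · rw [← hd] at hbe
      refine .inr ⟨{e}, .singleton he fun f hf hfe ↦ hbe ▸ (had f hf).lt_of_ne fun haf ↦ ?_⟩
      exact hboth f hf haf (by rw [hfe, ← hbe])
  · obtain hcard | hcard := le_total
      (b '' {e ∈ S | sideDeg S a (a e) = d ∧ sideDeg S b (b e) = d}).ncard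
      (a '' {e ∈ S | sideDeg S a (a e) = d ∧ sideDeg S b (b e) = d}).ncard
    · exact .inl (exists_isPeelable_of_forall_le hbd hne hcard)
    · simp only [and_comm (a := sideDeg S a _ = d)] at hne hcard
      exact .inr (exists_isPeelable_of_forall_le had hne hcard)

end Peeling

/-! ### Bipartite multigraphs: list edge-colouring with local list sizes -/

section Bipartite

variable {X Y ι γ : Type*} {a : E → X} {b : E → Y} {S N : Set E}

/-- Adjacency of edges in the bipartite multigraph with endpoint maps `a` and `b`. -/
def BiAdj (a : E → X) (b : E → Y) (e f : E) : Prop :=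
  e ≠ f ∧ (a e = a f ∨ b e = b f)

/-- The domination digraph of Galvin's argument: at its `a`-end the edge `e` yields to edges of
smaller rank, at its `b`-end to edges of larger rank. -/
def Prefers [LT ι] (a : E → X) (b : E → Y) (r : E → ι) (e f : E) : Prop :=
  a f = a e ∧ r f < r e ∨ b f = b e ∧ r e < r f

/-- A proper edge-colouring of a bipartite multigraph by ranks, in which each edge is dominated by
fewer edges than the larger degree of its two ends. -/
structure IsGalvinRanking (S : Set E) (a : E → X) (b : E → Y) (r : E → ℤ) : Prop where
  proper : ProperOn (BiAdj a b) S r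
  ncard_lt : ∀ e ∈ S,
    {f ∈ S | Prefers a b r e f}.ncard < max (sideDeg S a (a e)) (sideDeg S b (b e))

theorem IsGalvinRanking.swap {r : E → ℤ} (h : IsGalvinRanking S a b r) :
    IsGalvinRanking S b a (-r) where
  proper e he f hf hef := by
    simpa using h.proper e he f hf ⟨hef.1, hef.2.symm⟩
  ncard_lt e he := by
    simpa [Prefers, or_comm, max_comm] using h.ncard_lt e he

theorem IsGalvinRanking.congr {r r' : E → ℤ} (h : IsGalvinRanking S a b r) (hr : S.EqOn r r') :
    IsGalvinRanking S a b r' where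
  proper e he f hf hef := hr he ▸ hr hf ▸ h.proper e he f hf hef
  ncard_lt e he := by
    have hset : {f ∈ S | Prefers a b r' e f} = {f ∈ S | Prefers a b r e f} :=
      Set.ext fun f ↦ and_congr_right fun hf ↦ by rw [Prefers, Prefers, hr he, hr hf]
    exact hset ▸ h.ncard_lt e he

variable [Finite E]

/- Gale–Shapley: let `P` consist of the edges of minimum rank at their `a`-ends. If an edge `f ∈ P`
dominates `g ∈ P` at a `b`-end, then a kernel without `g` still absorbs `g`, since it contains `f`
or an edge dominating `f` at that same end. -/
theorem exists_isKernel_prefers [LinearOrder ι] (a : E → X) (b : E → Y) (r : E → ι) (S : Set E) :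
    ∃ K, IsKernel (Prefers a b r) S K := by
  induction S using WellFoundedLT.induction with
  | _ S ih =>
  set P := {e ∈ S | ∀ f ∈ S, a f = a e → r e ≤ r f} with hP
  by_cases hconflict : ∃ f ∈ P, ∃ g ∈ P, b f = b g ∧ r g < r f
  · obtain ⟨f, ⟨hfS, hfmin⟩, g, ⟨hgS, -⟩, hfg, hlt⟩ := hconflict
    have hfne : f ≠ g := by rintro rfl; exact hlt.false
    obtain ⟨K, hK⟩ := ih (S \ {g}) (Set.sdiff_singleton_ssubset.2 hgS)
    refine ⟨K, hK.subset.trans Set.sdiff_subset, hK.independent, fun e he heK ↦ ?_⟩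
    obtain rfl | heg := eq_or_ne e g
    · by_cases hfK : f ∈ K
      · exact ⟨f, hfK, .inr ⟨hfg, hlt⟩⟩
      obtain ⟨h, hhK, ⟨hhf, hh⟩ | ⟨hhf, hh⟩⟩ := hK.absorbing f ⟨hfS, hfne⟩ hfK
      · exact absurd hh (hfmin h (hK.subset hhK).1 hhf).not_gt
      · exact ⟨h, hhK, .inr ⟨hhf.trans hfg, hlt.trans hh⟩⟩
    · exact hK.absorbing e ⟨he, heg⟩ heK
  · push Not at hconflict
    refine ⟨P, Set.sep_subset _ _, ?_, fun e he heP ↦ ?_⟩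
    · rintro e he f hf (⟨hfe, hlt⟩ | ⟨hfe, hlt⟩)
      · exact (he.2 f hf.1 hfe).not_gt hlt
      · exact (hconflict f hf e he hfe).not_gt hlt
    · obtain ⟨f, ⟨hfS, hfe⟩, hfmin⟩ :=
        Set.exists_min_image {f ∈ S | a f = a e} r (Set.toFinite _) ⟨e, he, rfl⟩
      refine ⟨f, ⟨hfS, fun g hg hgf ↦ hfmin g ⟨hg, hgf.trans hfe⟩⟩, .inl ⟨hfe, ?_⟩⟩
      simp only [hP, Set.mem_sep_iff, not_and, not_forall, not_le] at heP
      obtain ⟨g, hg, hge, hlt⟩ := heP he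
      exact (hfmin g ⟨hg, hge⟩).trans_lt hlt

theorem ncard_prefers_lt_sideDeg [Preorder ι] {r : E → ι} {e : E} (he : e ∈ S)
    (hmin : ∀ f ∈ S, r e ≤ r f) : {f ∈ S | Prefers a b r e f}.ncard < sideDeg S b (b e) := by
  refine Set.ncard_lt_ncard ⟨fun f ⟨hf, hef⟩ ↦ ⟨hf, ?_⟩, fun h ↦ ?_⟩
  · exact hef.elim (fun hlt ↦ absurd hlt.2 (hmin f hf).not_gt) And.left
  · have hself : Prefers a b r e e := (h (show e ∈ _ from ⟨he, rfl⟩)).2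
    exact hself.elim (fun h ↦ h.2.false) fun h ↦ h.2.false

theorem ncard_prefers_le_add_sideDeg [Preorder ι] {r : E → ι} {e : E}
    (hmin : ∀ n ∈ N, r n ≤ r e) :
    {f ∈ S | Prefers a b r e f}.ncard ≤
      {f ∈ S \ N | Prefers a b r e f}.ncard + sideDeg N a (a e) := by
  have hsub : {f ∈ S | Prefers a b r e f} ⊆
      {f ∈ S \ N | Prefers a b r e f} ∪ {f ∈ N | a f = a e} := by
    rintro f ⟨hf, hef⟩
    by_cases hfN : f ∈ N
    · exact .inr ⟨hfN, hef.elim And.left fun h ↦ absurd h.2 (hmin f hfN).not_gt⟩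
    · exact .inl ⟨⟨hf, hfN⟩, hef⟩
  exact (Set.ncard_le_ncard hsub).trans (Set.ncard_union_le _ _)

/- Ranking `N` below everything else costs an edge outside `N` at most one further dominating edge,
at its `a`-end, and peelability makes the maximum of its end degrees drop in exactly this case. -/
theorem IsGalvinRanking.of_sdiff {r : E → ℤ} (hN : IsPeelable S a b N)
    (hr : IsGalvinRanking (S \ N) a b r) (hle : ∀ n ∈ N, ∀ m ∈ N, r n ≤ r m)
    (hlt : ∀ n ∈ N, ∀ e ∈ S \ N, r n < r e) : IsGalvinRanking S a b r where
  proper e he f hf hef := by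
    by_cases heN : e ∈ N <;> by_cases hfN : f ∈ N
    · exact absurd (hef.2.elim (hN.injOn_left heN hfN) (hN.injOn_right heN hfN)) hef.1
    · exact (hlt e heN f ⟨hf, hfN⟩).ne
    · exact (hlt f hfN e ⟨he, heN⟩).ne'
    · exact hr.proper e ⟨he, heN⟩ f ⟨hf, hfN⟩ hef
  ncard_lt e he := by
    by_cases heN : e ∈ N
    · refine (ncard_prefers_lt_sideDeg he fun f hf ↦ ?_).trans_le (le_max_right _ _)
      by_cases hfN : f ∈ N
      · exact hle e heN f hfN
      · exact (hlt e heN f ⟨hf, hfN⟩).le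
    · have hrank := hr.ncard_lt e ⟨he, heN⟩
      have hcount : _ ≤ _ + sideDeg N a (a e) :=
        ncard_prefers_le_add_sideDeg (S := S) (b := b) fun n hn ↦ (hlt n hn e ⟨he, heN⟩).le
      have ha := sideDeg_mono (S := S \ N) Set.sdiff_subset a (a e)
      have hb := sideDeg_mono (S := S \ N) Set.sdiff_subset b (b e)
      by_cases hea : a e ∈ a '' N
      · have hone := sideDeg_le_one hN.injOn_left (a e)
        have ha' := sideDeg_sdiff_lt hN.subset hea
        obtain heb | hdeg := hN.mem_image_or_lt e he hea
        · have hb' := sideDeg_sdiff_lt hN.subset heb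
          omega
        · omega
      · rw [sideDeg_eq_zero hea] at hcount
        omega

theorem IsPeelable.exists_isGalvinRanking (hN : IsPeelable S a b N)
    (h : ∃ r, IsGalvinRanking (S \ N) a b r) : ∃ r, IsGalvinRanking S a b r := by
  classical
  obtain ⟨r, hr⟩ := h
  obtain ⟨m, hm⟩ := (Set.finite_range r).bddBelow
  have hpiece : ∀ e ∉ N, N.piecewise (fun _ ↦ m - 1) r e = r e :=
    fun e he ↦ Set.piecewise_eq_of_notMem _ _ _ he
  refine ⟨N.piecewise (fun _ ↦ m - 1) r, .of_sdiff hN (hr.congr fun e he ↦ (hpiece e he.2).symm)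
    (fun n hn n' hn' ↦ ?_) fun n hn e he ↦ ?_⟩
  · simp [hn, hn']
  · have : m ≤ r e := hm ⟨e, rfl⟩
    rw [hpiece e he.2, Set.piecewise_eq_of_mem _ _ _ hn]
    omega

theorem exists_isGalvinRanking (a : E → X) (b : E → Y) (S : Set E) :
    ∃ r, IsGalvinRanking S a b r := by
  induction S using WellFoundedLT.induction with
  | _ S ih =>
  obtain rfl | hS := S.eq_empty_or_nonempty
  · exact ⟨0, by simp [ProperOn], by simp⟩
  obtain ⟨N, hN⟩ | ⟨N, hN⟩ := exists_isPeelable a b hS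
  · exact hN.exists_isGalvinRanking (ih _ (hN.subset.sdiff_ssubset_of_nonempty hN.nonempty))
  · obtain ⟨r, hr⟩ := ih _ (hN.subset.sdiff_ssubset_of_nonempty hN.nonempty)
    obtain ⟨r', hr'⟩ := hN.exists_isGalvinRanking ⟨-r, hr.swap⟩
    exact ⟨-r', hr'.swap⟩

theorem isChoosable_biAdj [Nonempty γ] (a : E → X) (b : E → Y) (S : Set E) :
    IsChoosable γ (BiAdj a b) S fun e ↦ max (sideDeg S a (a e)) (sideDeg S b (b e)) := by
  obtain ⟨r, hr⟩ := exists_isGalvinRanking a b S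
  refine (IsChoosable.of_kernels fun T _ ↦ exists_isKernel_prefers a b r T).mono ?_ hr.ncard_lt
  intro e he f hf hef
  have hne := hr.proper e he f hf hef
  obtain ⟨-, h | h⟩ := hef <;> obtain hlt | hlt := hne.lt_or_gt
  · exact .inr (.inl ⟨h, hlt⟩)
  · exact .inl (.inl ⟨h.symm, hlt⟩)
  · exact .inl (.inr ⟨h.symm, hlt⟩)
  · exact .inr (.inr ⟨h, hlt⟩)

end Bipartite

/-! ### Cuts and edge-colourings of multigraphs -/

section Multigraph

variable {γ : Type*} {ends : E → Sym2 V} {S T M H : Set E} {A : Set V} {e : E} {u v : V}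

instance : Std.Symm (MAdj ends) where
  symm _ _ h := ⟨h.1.symm, h.2.imp fun _ ↦ And.symm⟩

instance : Std.Irrefl (MAdj ends) where
  irrefl _ h := h.1 rfl

/-- The degree of `v` in the submultigraph with edge set `S`. -/
noncomputable def mdegOn (ends : E → Sym2 V) (S : Set E) (v : V) : ℕ :=
  {e ∈ S | v ∈ ends e}.ncard

/-- The edge cut between `A` and its complement. -/
def cut (ends : E → Sym2 V) (A : Set V) : Set E :=
  {e | (∃ u ∈ ends e, u ∈ A) ∧ ∃ v ∈ ends e, v ∉ A}

theorem mdegOn_univ (ends : E → Sym2 V) (v : V) : mdegOn ends Set.univ v = mdeg ends v := by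
  simp [mdegOn, mdeg]

theorem mem_cut (he : ends e = s(u, v)) : e ∈ cut ends A ↔ ¬(u ∈ A ↔ v ∈ A) := by
  simp only [cut, he, Set.mem_ofPred_eq, Sym2.mem_iff, exists_eq_or_imp, exists_eq_left]
  grind

theorem cut_symmDiff_singleton (hloop : ∀ e, ¬ (ends e).IsDiag) (A : Set V) (v : V) :
    cut ends (symmDiff A {v}) = symmDiff (cut ends A) {e | v ∈ ends e} := by
  ext e
  obtain ⟨x, y, hxy⟩ : ∃ x y, ends e = s(x, y) := Sym2.exists.1 ⟨_, rfl⟩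
  have hne : x ≠ y := by simpa [hxy] using hloop e
  simp only [Set.mem_symmDiff, mem_cut hxy, Set.mem_ofPred_eq, hxy, Sym2.mem_iff,
    Set.mem_singleton_iff]
  grind

variable [Finite E]

theorem mdegOn_union (ends : E → Sym2 V) (hST : Disjoint S T) (v : V) :
    mdegOn ends (S ∪ T) v = mdegOn ends S v + mdegOn ends T v := by
  have hsep : {e ∈ S ∪ T | v ∈ ends e} = {e ∈ S | v ∈ ends e} ∪ {e ∈ T | v ∈ ends e} :=
    Set.ext fun _ ↦ or_and_right
  rw [mdegOn, hsep]
  exact Set.ncard_union_eq (hST.mono (Set.sep_subset _ _) (Set.sep_subset _ _))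

theorem mdegOn_pos (he : e ∈ S) (hv : v ∈ ends e) : 0 < mdegOn ends S v :=
  (Set.ncard_pos (Set.toFinite _)).2 ⟨e, he, hv⟩

theorem mdegOn_le_one (hM : ∀ e ∈ M, ∀ f ∈ M, ¬ MAdj ends e f) (v : V) :
    mdegOn ends M v ≤ 1 :=
  (Set.ncard_le_one (Set.toFinite _)).2 fun e he f hf ↦
    by_contra fun hef ↦ hM e he.1 f hf.1 ⟨hef, v, he.2, hf.2⟩

theorem ncard_mAdj_le (S : Set E) (he : ends e = s(u, v)) :
    {f ∈ S | MAdj ends e f}.ncard ≤ mdegOn ends S u + mdegOn ends S v := by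
  have hsub : {f ∈ S | MAdj ends e f} ⊆ {f ∈ S | u ∈ ends f} ∪ {f ∈ S | v ∈ ends f} := by
    rintro f ⟨hf, -, w, hwe, hwf⟩
    rw [he, Sym2.mem_iff] at hwe
    obtain rfl | rfl := hwe
    · exact .inl ⟨hf, hwf⟩
    · exact .inr ⟨hf, hwf⟩
  exact (Set.ncard_le_ncard hsub).trans (Set.ncard_union_le _ _)

theorem ncard_sdiff_le_ncard_inter_of_ncard_symmDiff_le (h : (symmDiff S T).ncard ≤ S.ncard) :
    (T \ S).ncard ≤ (T ∩ S).ncard := by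
  have hsymm : (symmDiff S T).ncard = (S \ T).ncard + (T \ S).ncard :=
    Set.ncard_union_eq disjoint_sdiff_sdiff
  have hS := Set.ncard_inter_add_ncard_sdiff_eq_ncard S T
  rw [Set.inter_comm] at hS
  omega

/- In a maximum cut of `F`, moving `v` to the other side does not gain edges. -/
theorem exists_mdegOn_sdiff_cut_le (hloop : ∀ e, ¬ (ends e).IsDiag) (F : Set E) :
    ∃ A, ∀ v, mdegOn ends (F \ cut ends A) v ≤ mdegOn ends (F ∩ cut ends A) v := by
  obtain ⟨_, ⟨A, rfl⟩, hA⟩ := Set.exists_max_image (Set.range fun A ↦ F ∩ cut ends A) Set.ncard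
    (Set.toFinite _) (Set.range_nonempty _)
  refine ⟨A, fun v ↦ ?_⟩
  have hflip := hA _ ⟨symmDiff A {v}, rfl⟩
  beta_reduce at hflip
  rw [cut_symmDiff_singleton hloop, Set.inter_symmDiff_distrib_left] at hflip
  convert ncard_sdiff_le_ncard_inter_of_ncard_symmDiff_le hflip using 1 <;>
    exact congrArg Set.ncard (by ext e; grind)

theorem isChoosable_of_subset_cut [Nonempty γ] (hH : H ⊆ cut ends A) :
    IsChoosable γ (MAdj ends) H fun e ↦ ((ends e).map (mdegOn ends H)).sup := by
  obtain rfl | ⟨e₀, he₀⟩ := H.eq_empty_or_nonempty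
  · exact fun _ _ ↦ ⟨fun _ ↦ Classical.arbitrary γ, by simp [ProperOn], by simp⟩
  have : Nonempty V := (hH he₀).1.nonempty
  choose! a ha haA using fun e he ↦ (hH he : e ∈ cut ends A).1
  choose! b hb hbA using fun e he ↦ (hH he : e ∈ cut ends A).2
  have hends : ∀ e ∈ H, ends e = s(a e, b e) := fun e he ↦
    (Sym2.mem_and_mem_iff fun h ↦ hbA e he (Eq.subst (motive := (· ∈ A)) h (haA e he))).1
      ⟨ha e he, hb e he⟩
  refine (isChoosable_biAdj a b H).mono (fun e he f hf hef ↦ .inl ⟨hef.1, ?_⟩) fun e he ↦ ?_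
  · obtain ⟨-, w, hwe, hwf⟩ := hef
    rw [hends e he, Sym2.mem_iff] at hwe
    rw [hends f hf, Sym2.mem_iff] at hwf
    grind
  · rw [hends e he, Sym2.map_mk, Sym2.sup_mk]
    exact max_le_max (Set.ncard_le_ncard fun f hf ↦ ⟨hf.1, hf.2 ▸ ha f hf.1⟩)
      (Set.ncard_le_ncard fun f hf ↦ ⟨hf.1, hf.2 ▸ hb f hf.1⟩)

theorem exists_extend_of_mdegOn_add_lt [Nonempty γ] {c₀ : E → γ} {L : E → Finset γ}
    (hc₀ : ProperOn (MAdj ends) S c₀) (hST : Disjoint S T)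
    (hL : ∀ e ∈ T, ∀ u v, ends e = s(u, v) →
      mdegOn ends (S ∪ T) u + mdegOn ends (S ∪ T) v < #(L e)) :
    ∃ c, ProperOn (MAdj ends) (S ∪ T) c ∧ S.EqOn c c₀ ∧ ∀ e ∈ T, c e ∈ L e := by
  refine hc₀.exists_extend hST (isChoosable_of_symm T) fun e he ↦ ?_
  obtain ⟨u, v, huv⟩ : ∃ u v, ends e = s(u, v) := Sym2.exists.1 ⟨_, rfl⟩
  have hLe := hL e he u v huv
  rw [mdegOn_union ends hST, mdegOn_union ends hST] at hLe
  have hS := ncard_mAdj_le S huv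
  have hT := ncard_mAdj_le T huv
  omega

theorem exists_extend_of_subset_cut [Nonempty γ] {c₀ : E → γ} {L : E → Finset γ}
    (hc₀ : ProperOn (MAdj ends) S c₀) (hST : Disjoint S T) (hT : T ⊆ cut ends A)
    (hL : ∀ e ∈ T, ∀ u v, ends e = s(u, v) →
      mdegOn ends (S ∪ T) u + mdegOn ends S v ≤ #(L e)) :
    ∃ c, ProperOn (MAdj ends) (S ∪ T) c ∧ S.EqOn c c₀ ∧ ∀ e ∈ T, c e ∈ L e := by
  refine hc₀.exists_extend hST (isChoosable_of_subset_cut hT) fun e he ↦ ?_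
  obtain ⟨u, v, huv⟩ : ∃ u v, ends e = s(u, v) := Sym2.exists.1 ⟨_, rfl⟩
  have huvL := hL e he u v huv
  have hvuL := hL e he v u (huv.trans Sym2.eq_swap)
  rw [mdegOn_union ends hST] at huvL hvuL
  have hS := ncard_mAdj_le S huv
  rw [huv, Sym2.map_mk, Sym2.sup_mk]
  omega

end Multigraph

theorem shannon_extend_matching_general {γ : Type*} [Finite E] (ends : E → Sym2 V)
    (hloop : ∀ e, ¬ (ends e).IsDiag)
    (M : Set E) (hM : ∀ e ∈ M, ∀ f ∈ M, ¬ MAdj ends e f) (L : E → Finset γ)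
    (hL : ∀ e ∉ M, ∀ u v, ends e = s(u, v) → mdeg ends u + (mdeg ends v + 1) / 2 ≤ #(L e))
    (pre : E → γ) :
    ∃ c : E → γ, (∀ e f, MAdj ends e f → c e ≠ c f) ∧ (∀ e ∉ M, c e ∈ L e) ∧
      ∀ e ∈ M, c e = pre e := by
  obtain _ | ⟨⟨e₀⟩⟩ := isEmpty_or_nonempty E
  · exact ⟨pre, isEmptyElim, isEmptyElim, isEmptyElim⟩
  have : Nonempty γ := ⟨pre e₀⟩
  obtain ⟨A, hA⟩ := exists_mdegOn_sdiff_cut_le hloop Mᶜ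
  set R := Mᶜ \ cut ends A
  set H := Mᶜ ∩ cut ends A
  have hMR : Disjoint M R := disjoint_compl_right.mono_right Set.sdiff_subset
  have hMRH : Disjoint (M ∪ R) H :=
    (disjoint_compl_right.mono_right Set.inter_subset_left).union_left Set.disjoint_sdiff_inter
  have hcover : M ∪ R ∪ H = Set.univ := by
    rw [Set.union_assoc, Set.sdiff_union_inter, Set.union_compl_self]
  have hdeg (v : V) : mdegOn ends (M ∪ R) v + mdegOn ends H v = mdeg ends v := by
    rw [← mdegOn_univ, ← hcover, mdegOn_union ends hMRH]
  have hhalf (v : V) : 2 * mdegOn ends (M ∪ R) v ≤ mdeg ends v + 1 := by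
    have hMv := mdegOn_le_one hM v
    have hRH : mdegOn ends R v ≤ mdegOn ends H v := hA v
    have hsum := mdegOn_union ends hMR v
    have hv := hdeg v
    omega
  obtain ⟨c₁, hc₁, hc₁M, hc₁L⟩ := exists_extend_of_mdegOn_add_lt (c₀ := pre) (L := L)
    (fun e he f hf hef ↦ absurd hef (hM e he f hf)) hMR fun e he u v huv ↦ by
      have hRu : 0 < mdegOn ends R u := mdegOn_pos he (huv ▸ Sym2.mem_mk_left u v)
      have hRH : mdegOn ends R u ≤ mdegOn ends H u := hA u
      have hu := hdeg u
      have hv := hhalf v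
      have hLe := hL e he.1 u v huv
      omega
  obtain ⟨c, hc, hcc₁, hcL⟩ := exists_extend_of_subset_cut (L := L) hc₁ hMRH
    Set.inter_subset_right fun e he u v huv ↦ by
      have hv := hhalf v
      have hLe := hL e he.1 u v huv
      rw [hcover, mdegOn_univ]
      omega
  rw [hcover] at hc
  refine ⟨c, fun e f ↦ hc e trivial f trivial, fun e he ↦ ?_, fun e he ↦ ?_⟩
  · by_cases heA : e ∈ cut ends A
    · exact hcL e ⟨he, heA⟩
    · exact hcc₁ (.inr ⟨he, heA⟩) ▸ hc₁L e ⟨he, heA⟩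
  · exact (hcc₁ (.inl he)).trans (hc₁M he)

/-- Theorem 5: in a multigraph of maximum degree `Δ`, any precoloured matching extends
to a proper edge-colouring with palette `{1, …, ⌊3Δ/2 + 1/2⌋}` = `{1, …, (3Δ+1)/2}`. -/
theorem shannon_extend_matching [Fintype E] (ends : E → Sym2 V)
    (hloop : ∀ e, ¬ (ends e).IsDiag)
    (Δ : ℕ) (hΔ : IsGreatest (Set.range (mdeg ends)) Δ)
    (M : Set E) (hM : ∀ e ∈ M, ∀ f ∈ M, ¬ MAdj ends e f)
    (pre : E → ℕ) (hpal : ∀ e ∈ M, pre e ∈ Finset.Icc 1 ((3 * Δ + 1) / 2)) :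
    ∃ c : E → ℕ, MProper ends c ∧ (∀ e, c e ∈ Finset.Icc 1 ((3 * Δ + 1) / 2)) ∧
      ∀ e ∈ M, c e = pre e := by
  have hdeg (v : V) : mdeg ends v ≤ Δ := hΔ.2 ⟨v, rfl⟩
  obtain ⟨c, hc, hcL, hcM⟩ := shannon_extend_matching_general ends hloop M hM
    (fun _ ↦ Finset.Icc 1 ((3 * Δ + 1) / 2)) (fun e _ u v _ ↦ by grind [Nat.card_Icc]) pre
  exact ⟨c, hc, fun e ↦ (em (e ∈ M)).elim (fun he ↦ hcM e he ▸ hpal e he) (hcL e), hcM⟩
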